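/- Let n : ℕ, let A and T be sets of elements of the free group Fₙ on generators x₁,…,xₙ with T infinite, and for each subset Z ⊆ T let G_Z denote the presented group Fₙ/⟨⟨A ∪ Z⟩⟩. Assume that for every Z ⊆ T and every r ∈ T, the image of r in G_Z is trivial if and only if r ∈ Z. Then there exists an uncountable collection 𝒵 of subsets of T such that for any two distinct Z, Z' ∈ 𝒵 the groups G_Z and G_{Z'} are not isomorphic; in particular the groups G_Z fall into uncountably many isomorphism classes. -/

import Mathlib

/-- Given a fixed set `A` of relators and a subset `Z` of an auxiliary set `T` of relators,
`GZ A Z` is the presented group `⟨x₁,…,xₙ | A ∪ Z⟩`. -/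
abbrev GZ {n : ℕ} (A Z : Set (FreeGroup (Fin n))) : Type :=
  PresentedGroup (A ∪ Z)

/-- **Uncountably many isomorphism classes among the `G_Z`.** If `T` is infinite and for
every `Z ⊆ T` a relator `r ∈ T` dies in `G_Z = ⟨x₁,…,xₙ | A ∪ Z⟩` exactly when `r ∈ Z`,
then there is an uncountable collection `𝒵` of subsets of `T` whose associated groups
`G_Z` are pairwise non-isomorphic. -/
theorem uncountably_many_nonisomorphic_GZ (n : ℕ) (A T : Set (FreeGroup (Fin n)))
    (hT : T.Infinite)
    (h : ∀ Z ⊆ T, ∀ r ∈ T, PresentedGroup.mk (A ∪ Z) r = 1 ↔ r ∈ Z) :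
    ∃ 𝒵 : Set (Set (FreeGroup (Fin n))),
      ¬ 𝒵.Countable ∧
      (∀ Z ∈ 𝒵, Z ⊆ T) ∧
      (∀ Z ∈ 𝒵, ∀ Z' ∈ 𝒵, Z ≠ Z' → ¬ Nonempty (GZ A Z ≃* GZ A Z')) := by
  classical
  let S : Setoid {Z : Set (FreeGroup (Fin n)) // Z ⊆ T} :=
    { r := fun Z Z' => Nonempty (GZ A Z.1 ≃* GZ A Z'.1)
      iseqv := ⟨fun _ => ⟨MulEquiv.refl _⟩, fun ⟨e⟩ => ⟨e.symm⟩, fun ⟨e⟩ ⟨f⟩ => ⟨e.trans f⟩⟩ }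
  let out : Quotient S → Set (FreeGroup (Fin n)) := fun q => (Quotient.out q).1
  have hinj : Function.Injective out := by
    intro p q hpq
    have h1 : Quotient.out p = Quotient.out q := Subtype.ext hpq
    rw [← Quotient.out_eq p, h1, Quotient.out_eq]
  refine ⟨Set.range out, ?_, ?_, ?_⟩
  · intro hc
    have hQ : Countable (Quotient S) := by
      have : Countable (Set.range out) := hc.to_subtype
      exact (Equiv.ofInjective out hinj).injective.countable
    have hF : Countable (FreeGroup (Fin n)) :=
      Function.Surjective.countable (f := FreeGroup.mk) Quot.mk_surjective
    have hG : ∀ Z : Set (FreeGroup (Fin n)), Countable (GZ A Z) := fun Z =>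
      Function.Surjective.countable (f := PresentedGroup.mk (A ∪ Z))
        (PresentedGroup.mk_surjective _)
    have he : ∀ Z : {Z : Set (FreeGroup (Fin n)) // Z ⊆ T},
        Nonempty (GZ A Z.1 ≃* GZ A (out (Quotient.mk S Z))) := fun Z =>
      S.symm (Quotient.mk_out Z)
    let e := fun Z => (he Z).some
    let F : {Z : Set (FreeGroup (Fin n)) // Z ⊆ T} →
        (Σ q : Quotient S, (Fin n → GZ A (out q))) := fun Z =>
      ⟨Quotient.mk S Z, fun i => e Z (PresentedGroup.mk (A ∪ Z.1) (FreeGroup.of i))⟩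
    have key : ∀ (Z : {Z : Set (FreeGroup (Fin n)) // Z ⊆ T}) (r : FreeGroup (Fin n)),
        r ∈ T → (r ∈ Z.1 ↔ FreeGroup.lift (F Z).2 r = 1) := by
      intro Z r hr
      have hl : FreeGroup.lift (F Z).2 =
          (e Z).toMonoidHom.comp (PresentedGroup.mk (A ∪ Z.1)) := by
        ext i
        simp [F]
      rw [← h Z.1 Z.2 r hr, hl]
      simp
    have hFi : Function.Injective F := by
      intro Z Z' hZ
      apply Subtype.ext
      ext r
      constructor
      · intro hr
        have := (key Z r (Z.2 hr)).1 hr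
        rw [hZ] at this
        exact (key Z' r (Z.2 hr)).2 this
      · intro hr
        have := (key Z' r (Z'.2 hr)).1 hr
        rw [← hZ] at this
        exact (key Z r (Z'.2 hr)).2 this
    have hcS : Countable {Z : Set (FreeGroup (Fin n)) // Z ⊆ T} := hFi.countable
    have : Infinite T := hT.to_subtype
    have hcT : Countable (Set T) := by
      refine Function.Injective.countable
        (f := fun s : Set T => (⟨Subtype.val '' s, by simp⟩ :
          {Z : Set (FreeGroup (Fin n)) // Z ⊆ T})) ?_
      intro s t hst
      exact Set.image_injective.2 Subtype.val_injective (congrArg Subtype.val hst)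
    obtain ⟨g, hg⟩ := hcT.exists_injective_nat
    exact Function.cantor_injective (fun s => Infinite.natEmbedding T (g s))
      ((Infinite.natEmbedding T).injective.comp hg)
  · rintro _ ⟨q, rfl⟩
    exact (Quotient.out q).2
  · rintro _ ⟨p, rfl⟩ _ ⟨q, rfl⟩ hne hiso
    apply hne
    have : p = q := by
      rw [← Quotient.out_eq p, ← Quotient.out_eq q]
      exact Quotient.sound (s := S) hiso
    rw [this]
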